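/- For any k ≥ 2 probability distributions p^{(1)},…,p^{(k)} ∈ P_n, there exists a k-dimensional joint distribution M with marginals p^{(1)},…,p^{(k)} such that H(M) ≤ H(p^{(1)} ∧ p^{(2)} ∧ ⋯ ∧ p^{(k)}) + ⌈log₂ k⌉. Consequently, if M* is a joint distribution with these marginals of minimum entropy, then H(M) ≤ H(M*) + ⌈log₂ k⌉. -/

import Mathlib

/-! The prefix sums of `z = p 1 ∧ ⋯ ∧ p k` are the pointwise minima of the prefix sums of the
`p j` (`exists_prefSum_eq`), so at every index one of the relations `z ≼ p j` is tight.

Fix `j`. Since `z ≼ p j`, each `z i` can be cut once so that the pieces regroup into `p j`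
(`exists_single_cut`). Going from the last index to the first, some of the rests left over from
larger indices are used for `p j t`, as many as needed for what is missing to lie in `[0, z t]`;
this is possible because every rest is at most `z t`. Then `z t` is cut at the missing amount.
Where the prefix sums of `z` and `p j` agree no cut is needed.

Thus each `z i`, seen as an interval, receives at most `k - 1` proper cuts, and its common
refinement has `k` pieces (`exists_refinement`). Sending each piece to the tuple of its `k`
destinations gives a joint distribution whose entropy is at most that of the refinement
(`negMulLog_sum_le`), hence at most `H(z) + log₂ k` (`sum_negMulLog_le`).

For the comparison with an arbitrary joint distribution, any `i` of its entries have sum at most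
every `prefSum (p j) i`, hence at most `prefSum z i`; so its entries are majorized by `z`, and
`H(z)` is a lower bound by Schur concavity (`H2_le_H2joint`). -/

open Finset

/-- Sum of the first `i` components (0-indexed) of a vector; for `i ≥ n` this is the total
sum, which implements zero padding. -/
noncomputable def prefSum {n : ℕ} (p : Fin n → ℝ) (i : ℕ) : ℝ :=
  ∑ k : Fin n, if (k : ℕ) < i then p k else 0

/-- Membership in `P_n`: sorted non-increasingly, nonnegative components, summing to 1. -/
def IsProbVec {n : ℕ} (p : Fin n → ℝ) : Prop :=
  (∀ i j : Fin n, i ≤ j → p j ≤ p i) ∧ (∀ i, 0 ≤ p i) ∧ (∑ i, p i) = 1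

/-- Majorization `p ≼ q` (the shorter vector being padded with zeros). -/
def Maj {n m : ℕ} (p : Fin n → ℝ) (q : Fin m → ℝ) : Prop :=
  ∀ i : ℕ, prefSum p i ≤ prefSum q i
/-- Shannon entropy (base-2 logarithm, with the convention `0 · log (1/0) = 0`). -/
noncomputable def H2 {n : ℕ} (p : Fin n → ℝ) : ℝ :=
  ∑ i, -(p i * Real.logb 2 (p i))
/-- A `k`-dimensional joint distribution with marginals `p 1, …, p k ∈ P_n`. -/
def IsJointDist {n k : ℕ} (M : (Fin k → Fin n) → ℝ) (p : Fin k → Fin n → ℝ) : Prop :=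
  (∀ v, 0 ≤ M v) ∧ (∑ v, M v) = 1 ∧
    ∀ (j : Fin k) (t : Fin n),
      (∑ v ∈ Finset.univ.filter (fun v : Fin k → Fin n => v j = t), M v) = p j t

/-- Shannon entropy (base 2) of the vector of entries of a `k`-dimensional array. -/
noncomputable def H2joint {n k : ℕ} (M : (Fin k → Fin n) → ℝ) : ℝ :=
  ∑ v, -(M v * Real.logb 2 (M v))

/-! ### Prefix sums and the greatest lower bound -/

theorem prefSum_zero {n : ℕ} (p : Fin n → ℝ) : prefSum p 0 = 0 := by simp [prefSum]

theorem prefSum_succ {n : ℕ} (p : Fin n → ℝ) (t : Fin n) :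
    prefSum p ((t : ℕ) + 1) = prefSum p t + p t := by
  have h : p t = ∑ k : Fin n, if k = t then p k else 0 := by simp
  unfold prefSum
  conv_rhs => rw [h]
  rw [← sum_add_distrib]
  refine sum_congr rfl fun k _ => ?_
  by_cases h1 : k = t
  · subst h1; simp
  · have : (k : ℕ) ≠ t := fun h => h1 (Fin.ext h)
    by_cases h2 : (k : ℕ) < t
    · simp [h1, h2, Nat.lt_succ_of_lt h2]
    · have h3 : ¬ (k : ℕ) < t + 1 := by omega
      simp [h1, h2, h3]

theorem prefSum_of_le {n : ℕ} (p : Fin n → ℝ) {i : ℕ} (h : n ≤ i) :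
    prefSum p i = ∑ t, p t :=
  sum_congr rfl fun k _ => if_pos (lt_of_lt_of_le k.2 h)

theorem prefSum_mono {n : ℕ} {p : Fin n → ℝ} (hp : ∀ i, 0 ≤ p i) {a b : ℕ} (h : a ≤ b) :
    prefSum p a ≤ prefSum p b := by
  refine sum_le_sum fun k _ => ?_
  by_cases h1 : (k : ℕ) < a
  · simp [h1, lt_of_lt_of_le h1 h]
  · simp only [h1, if_false]; split_ifs <;> simp [hp]

/-- Differences of a function vanishing at `0` have that function as prefix sums. -/
theorem prefSum_diff {n : ℕ} (g : ℕ → ℝ) (h0 : g 0 = 0) {i : ℕ} (hi : i ≤ n) :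
    prefSum (fun t : Fin n => g (t + 1) - g t) i = g i := by
  induction i with
  | zero => rw [prefSum_zero, h0]
  | succ i ih =>
    have := prefSum_succ (fun t : Fin n => g (t + 1) - g t) ⟨i, hi⟩
    simp only at this
    rw [this, ih (by omega)]; ring

/-- The prefix sums of the greatest lower bound are the pointwise minima of the prefix sums:
at every index one of the inequalities `z ≼ p j` is tight. The witness is the vector of
differences of the pointwise minimum, which is sorted because a minimum of concave sequences
is concave. -/
theorem exists_prefSum_eq {n k : ℕ} (hk : 2 ≤ k)
    (p : Fin k → Fin n → ℝ) (hp : ∀ j, IsProbVec (p j))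
    (z : Fin n → ℝ) (hz : IsProbVec z) (hzle : ∀ j, Maj z (p j))
    (hzglb : ∀ w : Fin n → ℝ, IsProbVec w → (∀ j, Maj w (p j)) → Maj w z) (i : ℕ) :
    ∃ j, prefSum z i = prefSum (p j) i := by
  have : Nonempty (Fin k) := ⟨⟨0, by omega⟩⟩
  have hmin : ∀ i : ℕ, ∃ j, ∀ j', prefSum (p j) i ≤ prefSum (p j') i := fun i =>
    Finite.exists_min fun j => prefSum (p j) i
  choose a ha using hmin
  by_cases hi : n ≤ i
  · refine ⟨a 0, ?_⟩
    rw [prefSum_of_le _ hi, prefSum_of_le _ hi, hz.2.2, (hp _).2.2]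
  set g : ℕ → ℝ := fun i => prefSum (p (a i)) i with hg
  have g0 : g 0 = 0 := prefSum_zero _
  have hgle : ∀ i j, g i ≤ prefSum (p j) i := fun i j => ha i j
  have hconc : ∀ t, t + 1 < n → g (t + 2) - g (t + 1) ≤ g (t + 1) - g t := by
    intro t ht
    have e1 := prefSum_succ (p (a (t + 1))) ⟨t, by omega⟩
    have e2 := prefSum_succ (p (a (t + 1))) ⟨t + 1, ht⟩
    have e3 := (hp (a (t + 1))).1 ⟨t, by omega⟩ ⟨t + 1, ht⟩ (by simp)
    have i1 := hgle t (a (t + 1))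
    have i2 := hgle (t + 2) (a (t + 1))
    have e4 : g (t + 1) = prefSum (p (a (t + 1))) (t + 1) := rfl
    simp only at e1 e2
    rw [show t + 1 + 1 = t + 2 from rfl] at e2
    linarith
  set w : Fin n → ℝ := fun t => g (t + 1) - g t with hw
  have hpre : ∀ i, i ≤ n → prefSum w i = g i := fun i hi => prefSum_diff g g0 hi
  have hsum : ∑ t, w t = 1 := by
    rw [← prefSum_of_le w le_rfl, hpre n le_rfl, hg]
    simp only
    rw [prefSum_of_le _ le_rfl, (hp _).2.2]
  have hwp : IsProbVec w := by
    refine ⟨?_, ?_, hsum⟩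
    · have key : ∀ d (s : ℕ), s + d < n → g (s + d + 1) - g (s + d) ≤ g (s + 1) - g s := by
        intro d
        induction d with
        | zero => intro s _; simp
        | succ d ih =>
          intro s hs
          have := ih s (by omega)
          have h2 := hconc (s + d) (by omega)
          rw [show s + (d + 1) + 1 = s + d + 2 by ring, show s + (d + 1) = s + d + 1 by ring]
          linarith
      intro s t hst
      have := key (t - s) s (by have := t.2; have : (s : ℕ) ≤ t := hst; omega)
      rwa [show (s : ℕ) + (t - s) = t by have : (s : ℕ) ≤ t := hst; omega] at this
    · intro t
      have h1 := hgle t (a (t + 1))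
      have h2 := prefSum_mono (hp (a (t + 1))).2.1 (Nat.le_succ t)
      have e4 : g (t + 1) = prefSum (p (a (t + 1))) (t + 1) := rfl
      simp only [hw, Nat.succ_eq_add_one] at h2 ⊢
      linarith
  have hwm : ∀ j, Maj w (p j) := by
    intro j s
    by_cases hs : s ≤ n
    · rw [hpre s hs]; exact hgle s j
    · rw [prefSum_of_le _ (by omega), prefSum_of_le _ (by omega), hsum, (hp j).2.2]
  have h1 := hzglb w hwp hwm i
  rw [hpre i (by omega)] at h1
  exact ⟨a i, le_antisymm (hzle _ i) h1⟩

/-! ### Splitting each component in two -/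

/-- Greedy selection: pieces of size at most `M` reach any target `a` not above their total
with an overshoot of at most `M`. -/
theorem exists_subset_sum {ι : Type*} [DecidableEq ι] (f : ι → ℝ) (a M : ℝ) (haM : 0 ≤ a + M)
    (R : Finset ι) :
    (∀ i ∈ R, f i ≤ M) → a ≤ ∑ i ∈ R, f i →
      ∃ S ⊆ R, a ≤ ∑ i ∈ S, f i ∧ ∑ i ∈ S, f i ≤ a + M := by
  induction R using Finset.induction_on with
  | empty => intro _ h; exact ⟨∅, subset_rfl, h, by simpa using haM⟩
  | insert x R hx ih =>
    intro hf h
    by_cases h1 : a ≤ ∑ i ∈ R, f i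
    · obtain ⟨S, hS, h2⟩ := ih (fun i hi => hf i (mem_insert_of_mem hi)) h1
      exact ⟨S, hS.trans (subset_insert _ _), h2⟩
    · refine ⟨insert x R, subset_rfl, h, ?_⟩
      rw [sum_insert hx]
      have := hf x (mem_insert_self _ _)
      linarith

/-- State of the greedy construction once the components of index `≥ s` are treated. Component
`i` of `z` is cut into `c i`, which goes to `p i`, and the rest `z i - c i`, which goes to `p t`
if `b i = some t` and is still unassigned if `b i = none`. -/
structure CutState {n : ℕ} (z p : Fin n → ℝ) (s : ℕ) (c : Fin n → ℝ)
    (b : Fin n → Option (Fin n)) : Prop where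
  nonneg : ∀ i, 0 ≤ c i
  le : ∀ i, c i ≤ z i
  untouched : ∀ i : Fin n, (i : ℕ) < s → c i = z i ∧ b i = none
  target : ∀ i t : Fin n, b i = some t → s ≤ t
  fill : ∀ t : Fin n, s ≤ t → c t + ∑ i, (if b i = some t then z i - c i else 0) = p t
  tight : ∀ i : Fin n, prefSum z i = prefSum p i → c i = z i

/-- The total of the unassigned rests is the gap between the prefix sums. -/
theorem CutState.sum_rest {n : ℕ} {z p : Fin n → ℝ} (hz : IsProbVec z) (hp : IsProbVec p)
    {s : ℕ} {c : Fin n → ℝ} {b : Fin n → Option (Fin n)} (h : CutState z p s c b) :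
    ∑ i, (if b i = none then z i - c i else 0) = prefSum p s - prefSum z s := by
  have e1 : ∑ t : Fin n, (if (t : ℕ) < s then 0
      else c t + ∑ i, (if b i = some t then z i - c i else 0)) = 1 - prefSum p s := by
    rw [← hp.2.2, prefSum, ← sum_sub_distrib]
    refine sum_congr rfl fun t _ => ?_
    split_ifs with ht
    · simp
    · rw [h.fill t (by omega)]; simp
  have e2 : ∑ t : Fin n, (if (t : ℕ) < s then 0 else c t) = ∑ t, c t - prefSum z s := by
    rw [prefSum, ← sum_sub_distrib]
    refine sum_congr rfl fun t _ => ?_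
    split_ifs with ht
    · rw [(h.untouched t ht).1]; simp
    · simp
  have e3 : ∑ t : Fin n, (if (t : ℕ) < s then 0
      else ∑ i, (if b i = some t then z i - c i else 0))
      = ∑ i, (if b i = none then 0 else z i - c i) := by
    have : ∀ t : Fin n, (if (t : ℕ) < s then 0
      else ∑ i, (if b i = some t then z i - c i else 0))
      = ∑ i, (if b i = some t then z i - c i else 0) := by
      intro t
      split_ifs with ht
      · symm
        refine sum_eq_zero fun i _ => if_neg fun hb => ?_
        have := h.target i t hb
        omega
      · rfl
    simp_rw [this]
    rw [sum_comm]
    refine sum_congr rfl fun i _ => ?_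
    rcases hb : b i with _ | t <;> simp
  have e4 : ∑ t : Fin n, (if (t : ℕ) < s then 0
      else c t + ∑ i, (if b i = some t then z i - c i else 0))
      = ∑ t : Fin n, (if (t : ℕ) < s then 0 else c t) + ∑ t : Fin n, (if (t : ℕ) < s then 0
      else ∑ i, (if b i = some t then z i - c i else 0)) := by
    rw [← sum_add_distrib]
    refine sum_congr rfl fun t _ => ?_
    split_ifs <;> simp
  have e5 : ∑ i, (if b i = none then z i - c i else 0)
      + ∑ i, (if b i = none then 0 else z i - c i) = 1 - ∑ i, c i := by
    rw [← hz.2.2, ← sum_add_distrib, ← sum_sub_distrib]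
    refine sum_congr rfl fun t _ => ?_
    split_ifs <;> simp
  linarith

theorem CutState.step {n : ℕ} {z p : Fin n → ℝ} (hz : IsProbVec z) (hp : IsProbVec p)
    (hzp : Maj z p) {s : ℕ} (hs : s < n) {c : Fin n → ℝ} {b : Fin n → Option (Fin n)}
    (h : CutState z p (s + 1) c b) : ∃ c' b', CutState z p s c' b' := by
  set t₀ : Fin n := ⟨s, hs⟩ with ht₀
  set R : Finset (Fin n) := univ.filter fun i => b i = none ∧ s < (i : ℕ) with hR
  have hRsum : ∑ i ∈ R, (z i - c i) = (p t₀ - z t₀) + (prefSum p s - prefSum z s) := by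
    have e := h.sum_rest hz hp
    have e1 := prefSum_succ z t₀
    have e2 := prefSum_succ p t₀
    simp only [ht₀] at e1 e2
    rw [e1, e2] at e
    rw [hR, sum_filter]
    trans ∑ i, (if b i = none then z i - c i else 0)
    · refine sum_congr rfl fun i _ => ?_
      by_cases hi : s < (i : ℕ)
      · simp [hi]
      · simp [hi, (h.untouched i (by omega)).1]
    · rw [e]; ring
  -- each available rest comes from a smaller component of `z`, so it is at most `z t₀`
  obtain ⟨S, hSR, hS1, hS2⟩ := exists_subset_sum (fun i => z i - c i) (p t₀ - z t₀) (z t₀)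
    (by have := hp.2.1 t₀; linarith) R
    (by
      intro i hi
      have hi' : s < (i : ℕ) := (mem_filter.1 hi).2.2
      have h1 := hz.1 t₀ i (le_of_lt hi')
      have h2 := h.nonneg i
      linarith)
    (by have := hzp s; linarith)
  have hSmem : ∀ i ∈ S, b i = none ∧ s < (i : ℕ) := fun i hi => (mem_filter.1 (hSR hi)).2
  have ht₀S : t₀ ∉ S := fun hi => lt_irrefl _ (hSmem _ hi).2
  have hne : ∀ i : Fin n, s < (i : ℕ) → i ≠ t₀ := by
    rintro i hi rfl; exact lt_irrefl _ hi
  have hbt₀ : b t₀ = none := (h.untouched t₀ (by simp [ht₀])).2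
  refine ⟨fun i => if i = t₀ then p t₀ - ∑ i ∈ S, (z i - c i) else c i,
    fun i => if i ∈ S then some t₀ else b i, ?_, ?_, ?_, ?_, ?_, ?_⟩
  · intro i
    by_cases hi : i = t₀
    · simp only [hi, if_true]; linarith
    · simp only [hi, if_false]; exact h.nonneg i
  · intro i
    by_cases hi : i = t₀
    · simp only [hi, if_true]; linarith
    · simp only [hi, if_false]; exact h.le i
  · intro i hi
    have h1 : i ≠ t₀ := by rintro rfl; exact lt_irrefl _ hi
    have h2 : i ∉ S := fun h => by have := (hSmem i h).2; omega
    simp only [h1, h2, if_false]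
    exact h.untouched i (by omega)
  · intro i t
    by_cases hi : i ∈ S
    · simp only [hi, if_true, Option.some.injEq]; rintro rfl; exact le_rfl
    · simp only [hi, if_false]; intro hb; have := h.target i t hb; omega
  · intro t ht
    by_cases htt : t = t₀
    · have : ∀ i, (if (if i ∈ S then some t₀ else b i) = some t then
          z i - (if i = t₀ then p t₀ - ∑ i ∈ S, (z i - c i) else c i) else 0)
          = if i ∈ S then z i - c i else 0 := by
        intro i
        by_cases hi : i ∈ S
        · simp [hi, htt, hne i (hSmem i hi).2]
        · have : b i ≠ some t := fun hb => by
            have := h.target i t hb; rw [htt] at this; simp [ht₀] at this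
          simp [hi, this]
      simp only [this]
      rw [sum_ite_mem, univ_inter]
      simp [htt]
    · have : ∀ i, (if (if i ∈ S then some t₀ else b i) = some t then
          z i - (if i = t₀ then p t₀ - ∑ i ∈ S, (z i - c i) else c i) else 0)
          = if b i = some t then z i - c i else 0 := by
        intro i
        by_cases hi : i ∈ S
        · simp [hi, Ne.symm htt, (hSmem i hi).1]
        · by_cases hi2 : i = t₀
          · simp [hi2, hbt₀, ht₀S]
          · simp [hi, hi2]
      simp only [this, htt, if_false]
      refine h.fill t ?_
      have : (t : ℕ) ≠ s := fun h => htt (Fin.ext h)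
      omega
  · intro i hi
    by_cases hi2 : i = t₀
    · simp only [hi2, if_true]
      have h3 : ∑ i ∈ S, (z i - c i) ≤ ∑ i ∈ R, (z i - c i) :=
        sum_le_sum_of_subset_of_nonneg hSR fun i _ _ => sub_nonneg.2 (h.le i)
      rw [hi2] at hi
      simp only [ht₀] at hi
      linarith
    · simp only [hi2, if_false]; exact h.tight i hi

/-- If `z ≼ p`, then cutting every `z i` at most once, into `c i` and `z i - c i`, gives pieces
that can be grouped into `p`; no cut is needed at an index where the prefix sums agree. -/
theorem exists_single_cut {n : ℕ} {z p : Fin n → ℝ} (hz : IsProbVec z) (hp : IsProbVec p)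
    (hzp : Maj z p) : ∃ (c : Fin n → ℝ) (b : Fin n → Fin n),
      (∀ i, 0 ≤ c i) ∧ (∀ i, c i ≤ z i) ∧
      (∀ t, c t + ∑ i, (if b i = t then z i - c i else 0) = p t) ∧
      (∀ i : Fin n, prefSum z i = prefSum p i → c i = z i) := by
  have key : ∀ d, d ≤ n → ∃ c b, CutState z p (n - d) c b := by
    intro d
    induction d with
    | zero =>
      intro _
      refine ⟨z, fun _ => none, hz.2.1, fun _ => le_rfl, fun _ _ => ⟨rfl, rfl⟩,
        fun i t h => by simp at h, fun t ht => ?_, fun _ _ => rfl⟩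
      have := t.2
      omega
    | succ d ih =>
      intro hd
      obtain ⟨c, b, h⟩ := ih (by omega)
      rw [show n - d = n - (d + 1) + 1 by omega] at h
      exact h.step hz hp hzp (by omega)
  obtain ⟨c, b, h⟩ := key n le_rfl
  rw [Nat.sub_self] at h
  have h0 := h.sum_rest hz hp
  rw [prefSum_zero, prefSum_zero, sub_zero, sum_eq_zero_iff_of_nonneg] at h0
  · refine ⟨c, fun i => (b i).getD i, h.nonneg, h.le, fun t => ?_, h.tight⟩
    rw [← h.fill t (Nat.zero_le _)]
    congr 1
    refine sum_congr rfl fun i _ => ?_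
    have h1 := h0 i (mem_univ _)
    rcases hb : b i with _ | u
    · simp only [hb, if_true] at h1
      simp [h1]
    · simp [hb]
  · intro i _
    split_ifs
    · exact sub_nonneg.2 (h.le i)
    · exact le_rfl

/-! ### Common refinement of several cuts -/

/-- Cutting `[0, Z]` at `k` points, one of which is `Z` itself, gives `k` intervals of lengths
`w m`; `A j` is the set of the intervals contained in `[0, c j]`. -/
theorem exists_refinement {k : ℕ} (Z : ℝ) (c : Fin k → ℝ) (h0 : ∀ j, 0 ≤ c j)
    (hZ : ∀ j, c j ≤ Z) (hex : ∃ j, c j = Z) :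
    ∃ (w : Fin k → ℝ) (A : Fin k → Finset (Fin k)), (∀ m, 0 ≤ w m) ∧ ∑ m, w m = Z ∧
      ∀ j, ∑ m ∈ A j, w m = c j := by
  classical
  set σ := Tuple.sort c with hσ
  have hmono : Monotone (c ∘ σ) := Tuple.monotone_sort c
  -- breakpoints in increasing order, preceded by `0`
  set g : ℕ → ℝ := fun m => if h : 0 < m ∧ m - 1 < k then c (σ ⟨m - 1, h.2⟩) else 0 with hg
  have g0 : g 0 = 0 := by simp [hg]
  have gs : ∀ m : Fin k, g (m + 1) = c (σ m) := by intro m; simp [hg]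
  have hpre : ∀ m : Fin k, prefSum (fun m : Fin k => g (m + 1) - g m) (m + 1) = c (σ m) := by
    intro m
    rw [prefSum_diff g g0 m.2, gs]
  have hc : ∀ j, ∑ m ∈ univ.filter (fun m => m ≤ σ.symm j), (g ((m : ℕ) + 1) - g m) = c j := by
    intro j
    have := hpre (σ.symm j)
    rw [Equiv.apply_symm_apply] at this
    rw [← this, prefSum, sum_filter]
    refine sum_congr rfl fun m _ => ?_
    simp only [Nat.lt_succ_iff, Fin.le_def]
  refine ⟨fun m => g (m + 1) - g m, fun j => univ.filter fun m => m ≤ σ.symm j, ?_, ?_, hc⟩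
  · intro m
    simp only [gs, sub_nonneg]
    rcases Nat.eq_zero_or_pos (m : ℕ) with hm | hm
    · rw [hm, g0]; exact h0 _
    · have := gs ⟨m - 1, by omega⟩
      simp only [Nat.sub_add_cancel hm] at this
      rw [this]
      exact hmono (Fin.le_def.2 (Nat.sub_le _ _))
  · obtain ⟨j, hj⟩ := hex
    have hk : 0 < k := lt_of_le_of_lt (Nat.zero_le _) j.2
    have h1 := hpre ⟨k - 1, by omega⟩
    rw [prefSum_of_le _ (by simp only; omega)] at h1
    rw [h1]
    refine le_antisymm (hZ _) ?_
    rw [← hj]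
    have : (c ∘ σ) (σ.symm j) ≤ (c ∘ σ) ⟨k - 1, by omega⟩ :=
      hmono (Fin.le_def.2 (by have := (σ.symm j).2; simp only; omega))
    simpa using this

/-! ### Entropy inequalities -/

theorem H2_eq {n : ℕ} (p : Fin n → ℝ) : H2 p = (∑ i, Real.negMulLog (p i)) / Real.log 2 := by
  rw [H2, sum_div]
  refine sum_congr rfl fun i _ => ?_
  rw [Real.negMulLog, Real.logb]; ring

theorem H2joint_eq {n k : ℕ} (M : (Fin k → Fin n) → ℝ) :
    H2joint M = (∑ v, Real.negMulLog (M v)) / Real.log 2 := by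
  rw [H2joint, sum_div]
  refine sum_congr rfl fun i _ => ?_
  rw [Real.negMulLog, Real.logb]; ring

/-- Merging masses does not increase entropy. -/
theorem negMulLog_sum_le {ι : Type*} (S : Finset ι) (x : ι → ℝ) (hx : ∀ i ∈ S, 0 ≤ x i) :
    Real.negMulLog (∑ i ∈ S, x i) ≤ ∑ i ∈ S, Real.negMulLog (x i) := by
  rw [Real.negMulLog, neg_mul, sum_mul, ← sum_neg_distrib]
  refine sum_le_sum fun i hi => ?_
  rw [Real.negMulLog, neg_mul, neg_le_neg_iff]
  rcases (hx i hi).eq_or_lt with h | h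
  · simp [← h]
  · exact mul_le_mul_of_nonneg_left (Real.log_le_log h (single_le_sum hx hi)) h.le

/-- Splitting a mass into `k` pieces increases entropy by at most `log k` times the mass. -/
theorem sum_negMulLog_le {k : ℕ} (hk : 0 < k) (w : Fin k → ℝ) (hw : ∀ m, 0 ≤ w m) :
    ∑ m, Real.negMulLog (w m) ≤ Real.negMulLog (∑ m, w m) + (∑ m, w m) * Real.log k := by
  have hk' : (0 : ℝ) < k := by exact_mod_cast hk
  have h := Real.concaveOn_negMulLog.le_map_sum (t := univ) (w := fun _ : Fin k => (1 / k : ℝ))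
    (p := w) (fun _ _ => by positivity) (by simp [hk'.ne']) (fun m _ => hw m)
  simp only [smul_eq_mul] at h
  rw [← mul_sum, ← mul_sum, Real.negMulLog_mul] at h
  have e : Real.negMulLog (1 / k) = 1 / k * Real.log k := by
    rw [Real.negMulLog, one_div, Real.log_inv]; ring
  rw [e] at h
  have h2 := mul_le_mul_of_nonneg_left h hk'.le
  have e1 : (k : ℝ) * (1 / k * ∑ m, Real.negMulLog (w m)) = ∑ m, Real.negMulLog (w m) := by
    field_simp
  have e2 : (k : ℝ) * ((∑ m, w m) * (1 / k * Real.log k) + 1 / k * Real.negMulLog (∑ m, w m))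
      = Real.negMulLog (∑ m, w m) + (∑ m, w m) * Real.log k := by
    field_simp; ring
  rwa [e1, e2] at h2

/-- The tangent-line inequality for the concave function `-x log x`. -/
theorem negMulLog_le_tangent {a b : ℝ} (ha : 0 ≤ a) (hb : 0 < b) :
    Real.negMulLog a ≤ Real.negMulLog b - (Real.log b + 1) * (a - b) := by
  rcases ha.eq_or_lt with h | h
  · rw [← h, Real.negMulLog_zero, Real.negMulLog]; nlinarith
  · have h1 := Real.log_le_sub_one_of_pos (div_pos hb h)
    rw [Real.log_div hb.ne' h.ne'] at h1
    have h2 := mul_le_mul_of_nonneg_left h1 h.le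
    have e : a * (b / a - 1) = b - a := by field_simp
    rw [e] at h2
    simp only [Real.negMulLog]
    nlinarith

/-- Summation by parts for a non-increasing weight `f`. -/
theorem abel_le (f d : ℕ → ℝ) (N : ℕ)
    (hf : ∀ i, i + 1 < N + 1 → f (i + 1) ≤ f i)
    (hd : ∀ i, 0 ≤ ∑ l ∈ range i, d l) (m : ℕ) (hm : m ≤ N) :
    f m * ∑ l ∈ range (m + 1), d l ≤ ∑ l ∈ range (m + 1), f l * d l := by
  induction m with
  | zero => simp
  | succ m ih =>
    rw [sum_range_succ, sum_range_succ (fun l => f l * d l)]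
    have h1 := ih (by omega)
    have h2 := mul_le_mul_of_nonneg_right (hf m (by omega)) (hd (m + 1))
    linarith

/-- The tangent inequality summed along two sequences ordered by majorization: the entropy of
the majorizing one is smaller. -/
theorem sum_negMulLog_le_of_majorized (a b : ℕ → ℝ) (N : ℕ) (ha : ∀ i, 0 ≤ a i)
    (hb : ∀ i, i < N → 0 < b i) (hanti : ∀ i, i + 1 < N → b (i + 1) ≤ b i)
    (hle : ∀ i, i ≤ N → ∑ l ∈ range i, b l ≤ ∑ l ∈ range i, a l)
    (htot : ∑ l ∈ range N, b l = ∑ l ∈ range N, a l) :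
    ∑ l ∈ range N, Real.negMulLog (a l) ≤ ∑ l ∈ range N, Real.negMulLog (b l) := by
  rcases N with _ | N
  · simp
  have h1 : ∑ l ∈ range (N + 1), Real.negMulLog (a l) ≤
      ∑ l ∈ range (N + 1), (Real.negMulLog (b l) - (Real.log (b l) + 1) * (a l - b l)) :=
    sum_le_sum fun l hl => negMulLog_le_tangent (ha l) (hb l (mem_range.1 hl))
  -- beyond index `N` the gaps are replaced by `0`, which keeps the partial sums nonnegative
  have h2 := abel_le (fun l => Real.log (b l) + 1) (fun l => if l < N + 1 then a l - b l else 0) N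
    (fun i hi => by
      have := Real.log_le_log (hb (i + 1) hi) (hanti i hi)
      linarith)
    (fun i => by
      rw [← sum_filter]
      have : (range i).filter (fun l => l < N + 1) = range (min i (N + 1)) := by
        ext l; simp
      rw [this, sum_sub_distrib, sub_nonneg]
      exact hle _ (min_le_right _ _)) N le_rfl
  have e1 : ∑ l ∈ range (N + 1), (if l < N + 1 then a l - b l else 0) = 0 := by
    rw [sum_congr rfl fun l hl => if_pos (mem_range.1 hl), sum_sub_distrib, htot, sub_self]
  have e2 : ∑ l ∈ range (N + 1), (Real.log (b l) + 1) * (if l < N + 1 then a l - b l else 0)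
      = ∑ l ∈ range (N + 1), (Real.log (b l) + 1) * (a l - b l) :=
    sum_congr rfl fun l hl => by rw [if_pos (mem_range.1 hl)]
  rw [e1, e2, mul_zero] at h2
  rw [sum_sub_distrib] at h1
  linarith

/-- In a sorted vector the first components have the largest sum. -/
theorem sum_le_prefSum {n : ℕ} {p : Fin n → ℝ} (hp : IsProbVec p) (T : Finset (Fin n)) :
    ∑ t ∈ T, p t ≤ prefSum p T.card := by
  rcases T.eq_empty_or_nonempty with rfl | hT
  · simp [prefSum]
  have hcn : T.card ≤ n := by simpa using card_le_univ T
  have hc0 := hT.card_pos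
  set θ := p ⟨T.card - 1, by omega⟩ with hθ
  have h1 : ∑ t ∈ T, (p t - θ) ≤ ∑ t : Fin n, (if (t : ℕ) < T.card then p t - θ else 0) := by
    have e : ∑ t ∈ T, (p t - θ) = ∑ t, if t ∈ T then p t - θ else 0 := by simp
    rw [e]
    refine sum_le_sum fun t _ => ?_
    by_cases ht : (t : ℕ) < T.card
    · have := hp.1 t ⟨T.card - 1, by omega⟩ (Fin.le_def.2 (Nat.le_sub_one_of_lt ht))
      split_ifs <;> linarith
    · have := hp.1 ⟨T.card - 1, by omega⟩ t (Fin.le_def.2 ((Nat.sub_le _ _).trans (not_lt.1 ht)))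
      split_ifs <;> linarith
  have e1 : ∑ t : Fin n, (if (t : ℕ) < T.card then p t - θ else 0)
      = prefSum p T.card - T.card * θ := by
    have : ((univ.filter fun t : Fin n => (t : ℕ) < T.card).card : ℝ) = T.card := by
      rw [Fin.card_filter_val_lt, min_eq_right hcn]
    rw [← sum_filter, sum_sub_distrib, sum_const, nsmul_eq_mul, this, prefSum, sum_filter]
  rw [sum_sub_distrib, sum_const, nsmul_eq_mul, e1] at h1
  linarith

/-- Every joint distribution has entropy at least that of the greatest lower bound: any `i` of
its entries lie in at most `i` slices in each direction `j`, hence have sum at most the `i`-th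
prefix sum of every `p j`, and therefore of `z`. -/
theorem H2_le_H2joint {n k : ℕ}
    (p : Fin k → Fin n → ℝ) (hp : ∀ j, IsProbVec (p j))
    (z : Fin n → ℝ) (hz : IsProbVec z)
    (hex : ∀ i, ∃ j, prefSum z i = prefSum (p j) i)
    (M : (Fin k → Fin n) → ℝ) (hM : IsJointDist M p) : H2 z ≤ H2joint M := by
  classical
  have hT : ∀ T : Finset (Fin k → Fin n), ∑ v ∈ T, M v ≤ prefSum z T.card := by
    intro T
    obtain ⟨j, hj⟩ := hex T.card
    rw [hj]
    calc ∑ v ∈ T, M v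
        ≤ ∑ v ∈ univ.filter (fun v : Fin k → Fin n => v j ∈ T.image fun v => v j), M v := by
          refine sum_le_sum_of_subset_of_nonneg (fun v hv => ?_) fun v _ _ => hM.1 v
          exact mem_filter.2 ⟨mem_univ _, mem_image_of_mem _ hv⟩
      _ = ∑ t ∈ T.image (fun v => v j), p j t := by
          rw [← sum_fiberwise_of_maps_to (s := univ.filter
            fun v : Fin k → Fin n => v j ∈ T.image fun v => v j) (t := T.image fun v => v j) (g := fun v => v j)
            (fun v hv => (mem_filter.1 hv).2)]
          refine sum_congr rfl fun t ht => ?_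
          rw [← hM.2.2 j t, filter_filter]
          refine sum_congr ?_ fun _ _ => rfl
          ext v
          simp only [mem_filter, mem_univ, true_and]
          exact ⟨fun h => h.2, fun h => ⟨h ▸ ht, h⟩⟩
      _ ≤ prefSum (p j) (T.image fun v => v j).card := sum_le_prefSum (hp j) _
      _ ≤ prefSum (p j) T.card := prefSum_mono (hp j).2.1 card_image_le
  set S : Finset (Fin k → Fin n) := univ.filter fun v => 0 < M v with hS
  set N := S.card with hN
  have hzero : ∀ v ∉ S, M v = 0 := fun v hv =>
    le_antisymm (not_lt.1 fun h => hv (mem_filter.2 ⟨mem_univ _, h⟩)) (hM.1 v)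
  have hSsum : ∑ v ∈ S, M v = 1 := by
    rw [← hM.2.1]; exact sum_subset (subset_univ _) fun v _ hv => hzero v hv
  -- the positive entries in non-increasing order
  obtain ⟨e, he⟩ : ∃ e : Fin N ≃ S, Antitone fun i => M (e i) := by
    refine ⟨(Tuple.sort fun i => -M (S.equivFin.symm i)).trans S.equivFin.symm, ?_⟩
    intro i i' h
    have := Tuple.monotone_sort (fun i => -M (S.equivFin.symm i)) h
    simpa using this
  set b : ℕ → ℝ := fun i => if h : i < N then M (e ⟨i, h⟩) else 0 with hb
  set a : ℕ → ℝ := fun i => if h : i < n then z ⟨i, h⟩ else 0 with ha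
  have ha0 : ∀ i, 0 ≤ a i := by
    intro i; simp only [ha]; split_ifs
    · exact hz.2.1 _
    · exact le_rfl
  have hasum : ∀ i, ∑ l ∈ range i, a l = prefSum z i := by
    intro i
    induction i with
    | zero => simp [prefSum_zero]
    | succ i ih =>
      rw [sum_range_succ, ih]
      by_cases hi : i < n
      · have := prefSum_succ z ⟨i, hi⟩
        simp only at this
        simp [ha, hi, this]
      · rw [prefSum_of_le _ (by omega), prefSum_of_le _ (by omega)]; simp [ha, hi]
  have hfull : ∀ f : ℝ → ℝ, ∑ l ∈ range N, f (b l) = ∑ v ∈ S, f (M v) := by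
    intro f
    rw [← sum_coe_sort S, ← e.sum_comp, ← Fin.sum_univ_eq_sum_range (fun l => f (b l))]
    refine sum_congr rfl fun i _ => ?_
    simp [hb]
  have hbsum : ∀ i, i ≤ N → ∑ l ∈ range i, b l ≤ ∑ l ∈ range i, a l := by
    intro i hi
    rw [hasum]
    set emb : Fin i ↪ (Fin k → Fin n) :=
      ⟨fun l => (e (Fin.castLE hi l) : Fin k → Fin n), fun l l' h =>
        Fin.castLE_injective hi (e.injective (Subtype.ext h))⟩ with hemb
    have h1 := hT (univ.map emb)
    rw [card_map, card_univ, Fintype.card_fin, sum_map] at h1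
    rw [← Fin.sum_univ_eq_sum_range]
    refine le_trans (le_of_eq (sum_congr rfl fun l _ => ?_)) h1
    have : (l : ℕ) < N := lt_of_lt_of_le l.2 hi
    simp only [hb, this, dif_pos, hemb]
    rfl
  have hbtot : ∑ l ∈ range N, b l = 1 := (hfull id).trans hSsum
  have hzN : prefSum z N = 1 := by
    refine le_antisymm ?_ ?_
    · rw [← hz.2.2, ← prefSum_of_le z (le_max_left n N)]
      exact prefSum_mono hz.2.1 (le_max_right _ _)
    · rw [← hSsum]; exact hT S
  have hmain := sum_negMulLog_le_of_majorized a b N ha0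
    (fun i hi => by simp only [hb, hi, dif_pos]; exact (mem_filter.1 (e ⟨i, hi⟩).2).2)
    (fun i hi => by
      simp only [hb, hi, dif_pos, show i < N by omega]
      exact he (Fin.le_def.2 (Nat.le_succ i)))
    hbsum (by rw [hbtot, hasum, hzN])
  rw [H2_eq, H2joint_eq]
  refine div_le_div_of_nonneg_right ?_ (Real.log_nonneg (by norm_num))
  have e1 : ∑ v, Real.negMulLog (M v) = ∑ v ∈ S, Real.negMulLog (M v) := by
    symm
    refine sum_subset (subset_univ _) fun v _ hv => ?_
    rw [hzero v hv, Real.negMulLog_zero]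
  -- `z` vanishes from index `N` on, since its first `N` components already sum to `1`
  have hatail : ∀ l, N ≤ l → a l = 0 := by
    intro l hl
    have h1 : ∑ i ∈ range (l + 1), a i ≤ 1 := by
      rw [hasum, ← hz.2.2, ← prefSum_of_le z (le_max_left n (l + 1))]
      exact prefSum_mono hz.2.1 (le_max_right _ _)
    have h2 : 1 ≤ ∑ i ∈ range l, a i := by
      rw [hasum, ← hzN]; exact prefSum_mono hz.2.1 hl
    rw [sum_range_succ] at h1
    exact le_antisymm (by linarith) (ha0 l)
  have e2 : ∑ i, Real.negMulLog (z i) = ∑ l ∈ range N, Real.negMulLog (a l) := by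
    have h1 : ∑ i, Real.negMulLog (z i) = ∑ l ∈ range n, Real.negMulLog (a l) := by
      rw [← Fin.sum_univ_eq_sum_range (fun l => Real.negMulLog (a l))]
      exact sum_congr rfl fun i _ => by simp [ha]
    rw [h1]
    have h2 : ∑ l ∈ range n, Real.negMulLog (a l)
        = ∑ l ∈ range (max n N), Real.negMulLog (a l) := by
      refine sum_subset (range_subset_range.2 (le_max_left _ _)) fun l _ hl => ?_
      have hl' : ¬ l < n := by simpa using hl
      simp [ha, hl']
    have h3 : ∑ l ∈ range N, Real.negMulLog (a l)
        = ∑ l ∈ range (max n N), Real.negMulLog (a l) := by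
      refine sum_subset (range_subset_range.2 (le_max_right _ _)) fun l _ hl => ?_
      rw [hatail l (by simpa using hl), Real.negMulLog_zero]
    rw [h2, h3]
  rw [e1, e2, ← hfull]
  exact hmain

/-! ### The coupling -/

/-- A coupling of entropy at most `H(z) + log₂ k`: at each index `i` the `k` cuts of `z i`, one
for each `p j`, have a common refinement into `k` pieces because one of the cuts is trivial. -/
theorem exists_coupling {n k : ℕ} (hk : 2 ≤ k)
    (p : Fin k → Fin n → ℝ) (hp : ∀ j, IsProbVec (p j))
    (z : Fin n → ℝ) (hz : IsProbVec z) (hzle : ∀ j, Maj z (p j))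
    (hex : ∀ i, ∃ j, prefSum z i = prefSum (p j) i) :
    ∃ M : (Fin k → Fin n) → ℝ, IsJointDist M p ∧
      ∑ v, Real.negMulLog (M v) ≤ ∑ i, Real.negMulLog (z i) + Real.log k := by
  classical
  choose c b hc0 hcz hfill htight using fun j => exists_single_cut hz (hp j) (hzle j)
  have href := fun i => exists_refinement (z i) (fun j => c j i) (fun j => hc0 j i)
    (fun j => hcz j i) (by
      obtain ⟨j, hj⟩ := hex i
      exact ⟨j, htight j i hj⟩)
  choose w A hw0 hwsum hwA using href
  set f : Fin n × Fin k → (Fin k → Fin n) := fun x j => if x.2 ∈ A x.1 j then x.1 else b j x.1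
    with hf
  set W : Fin n × Fin k → ℝ := fun x => w x.1 x.2 with hW
  have hW0 : ∀ x, 0 ≤ W x := fun x => hw0 _ _
  set M : (Fin k → Fin n) → ℝ := fun v => ∑ x ∈ univ.filter (fun x => f x = v), W x with hM
  refine ⟨M, ⟨fun v => sum_nonneg fun x _ => hW0 x, ?_, ?_⟩, ?_⟩
  · have : ∑ v, M v = ∑ x, W x := sum_fiberwise univ f W
    rw [this, Fintype.sum_prod_type, ← hz.2.2]
    exact sum_congr rfl fun i _ => hwsum i
  · intro j t
    have h1 : ∑ v ∈ univ.filter (fun v : Fin k → Fin n => v j = t), M v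
        = ∑ x, if f x j = t then W x else 0 := by
      rw [sum_filter, ← sum_fiberwise univ f fun x => if f x j = t then W x else 0]
      refine sum_congr rfl fun v _ => ?_
      by_cases hv : v j = t
      · rw [if_pos hv]
        refine sum_congr rfl fun x hx => ?_
        rw [if_pos (by rw [(mem_filter.1 hx).2]; exact hv)]
      · rw [if_neg hv]
        symm
        refine sum_eq_zero fun x hx => ?_
        rw [if_neg (by rw [(mem_filter.1 hx).2]; exact hv)]
    rw [h1, Fintype.sum_prod_type, ← hfill j t]
    have h2 : ∀ i, ∑ m, (if f (i, m) j = t then W (i, m) else 0)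
        = (if i = t then c j i else 0) + (if b j i = t then z i - c j i else 0) := by
      intro i
      have hA : ∑ m ∈ univ.filter (fun m => m ∈ A i j), w i m = c j i := by
        rw [filter_mem_eq_inter, univ_inter, hwA i j]
      have hA' : ∑ m ∈ univ.filter (fun m => m ∉ A i j), w i m = z i - c j i := by
        have := sum_filter_add_sum_filter_not univ (fun m => m ∈ A i j) (w i)
        rw [hwsum i, hA] at this
        linarith
      rw [← hA', ← hA, sum_filter, sum_filter]
      simp only [hf, hW]
      by_cases h1 : i = t <;> by_cases h2 : b j i = t
      · rw [if_pos h1, if_pos h2, ← sum_add_distrib]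
        refine sum_congr rfl fun m _ => ?_
        split_ifs <;> simp_all
      · rw [if_pos h1, if_neg h2, add_zero]
        refine sum_congr rfl fun m _ => ?_
        split_ifs <;> simp_all
      · rw [if_neg h1, if_pos h2, zero_add]
        refine sum_congr rfl fun m _ => ?_
        split_ifs <;> simp_all
      · rw [if_neg h1, if_neg h2, add_zero]
        refine sum_eq_zero fun m _ => ?_
        split_ifs <;> simp_all
    rw [sum_congr rfl fun i _ => h2 i, sum_add_distrib]
    simp
  · calc ∑ v, Real.negMulLog (M v)
        ≤ ∑ v, ∑ x ∈ univ.filter (fun x => f x = v), Real.negMulLog (W x) :=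
          sum_le_sum fun v _ => negMulLog_sum_le _ _ fun x _ => hW0 x
      _ = ∑ x, Real.negMulLog (W x) := sum_fiberwise univ f fun x => Real.negMulLog (W x)
      _ = ∑ i, ∑ m, Real.negMulLog (w i m) := Fintype.sum_prod_type _
      _ ≤ ∑ i, (Real.negMulLog (z i) + z i * Real.log k) := by
          refine sum_le_sum fun i _ => ?_
          have := sum_negMulLog_le (by omega) (w i) (hw0 i)
          rwa [hwsum i] at this
      _ = ∑ i, Real.negMulLog (z i) + Real.log k := by
          rw [sum_add_distrib, ← sum_mul, hz.2.2, one_mul]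

/-- for any `k ≥ 2` distributions `p 1, …, p k ∈ P_n` with greatest lower bound
`z = p 1 ∧ ⋯ ∧ p k` in `(P_n, ≼)`, there is a `k`-dimensional joint distribution `M` with
marginals `p 1, …, p k` such that `H(M) ≤ H(z) + ⌈log₂ k⌉`; consequently
`H(M) ≤ H(M*) + ⌈log₂ k⌉` for any joint distribution `M*` with these marginals (in
particular a minimum-entropy one). -/
theorem exists_joint_entropy_le_glb_add_log {n k : ℕ} (hk : 2 ≤ k)
    (p : Fin k → Fin n → ℝ) (hp : ∀ j, IsProbVec (p j))
    (z : Fin n → ℝ) (hz : IsProbVec z) (hzle : ∀ j, Maj z (p j))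
    (hzglb : ∀ w : Fin n → ℝ, IsProbVec w → (∀ j, Maj w (p j)) → Maj w z) :
    ∃ M : (Fin k → Fin n) → ℝ, IsJointDist M p ∧
      H2joint M ≤ H2 z + (Nat.clog 2 k : ℝ) ∧
      ∀ Mstar : (Fin k → Fin n) → ℝ, IsJointDist Mstar p →
        H2joint M ≤ H2joint Mstar + (Nat.clog 2 k : ℝ) := by
  have hex := exists_prefSum_eq hk p hp z hz hzle hzglb
  obtain ⟨M, hM, hH⟩ := exists_coupling hk p hp z hz hzle hex
  have hlog2 : 0 < Real.log 2 := Real.log_pos (by norm_num)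
  have hk0 : (0 : ℝ) < k := by exact_mod_cast (by omega : 0 < k)
  have hclog : Real.log k ≤ (Nat.clog 2 k : ℝ) * Real.log 2 := by
    rw [← Real.log_pow]
    refine Real.log_le_log hk0 ?_
    exact_mod_cast Nat.le_pow_clog (by norm_num) k
  have h1 : H2joint M ≤ H2 z + (Nat.clog 2 k : ℝ) := by
    rw [H2joint_eq, H2_eq, div_add' _ _ _ hlog2.ne']
    exact div_le_div_of_nonneg_right (by linarith) hlog2.le
  refine ⟨M, hM, h1, fun Mstar hMs => ?_⟩
  have := H2_le_H2joint p hp z hz hex Mstar hMs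
  linarith
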